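/- Let f : ℂ → ℂ be a nonconstant holomorphic (entire) function. Define h(z) = |f′(z)|²·(1 + |f(z)|²·u(|f(z)|²)²) + 1 on ℂ∖f⁻¹(0), and let K denote the Gaussian curvature of the conformal metric h(z)|dz|² on ℂ∖f⁻¹(0). Then K(p) ≤ 0 for every p ∈ ℂ with f(p) ≠ 0. -/

import Mathlib

open Complex Filter Topology Metric
open scoped ComplexOrder

/-- The function `u(t) = (t-1)/(t log t)` for `t ≠ 1`, extended by `u(1) = 1`. -/
noncomputable def u (t : ℝ) : ℝ := if t = 1 then 1 else (t - 1) / (t * Real.log t)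

/-- Wirtinger derivative `∂g` of a complex-valued function on `ℂ` (real-differentiable sense). -/
noncomputable def wdz (g : ℂ → ℂ) (z : ℂ) : ℂ :=
  (fderiv ℝ g z 1 - Complex.I * fderiv ℝ g z Complex.I) / 2

/-- Wirtinger derivative `∂̄g` of a complex-valued function on `ℂ`. -/
noncomputable def wdzbar (g : ℂ → ℂ) (z : ℂ) : ℂ :=
  (fderiv ℝ g z 1 + Complex.I * fderiv ℝ g z Complex.I) / 2

/-- `∂h` for a real-valued `h`. -/
noncomputable def wdzR (h : ℂ → ℝ) : ℂ → ℂ := wdz fun w => (h w : ℂ)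

/-- `∂̄h` for a real-valued `h`. -/
noncomputable def wdzbarR (h : ℂ → ℝ) : ℂ → ℂ := wdzbar fun w => (h w : ℂ)

/-- `∂∂̄h` for a real-valued `h`. -/
noncomputable def wlapR (h : ℂ → ℝ) : ℂ → ℂ := wdz (wdzbarR h)

/-- The numerator `h·∂∂̄h − ∂h·∂̄h` of (−1/2 times) the Gaussian curvature of `h|dz|²`. -/
noncomputable def curvNum (h : ℂ → ℝ) (z : ℂ) : ℂ :=
  (h z : ℂ) * wlapR h z - wdzR h z * wdzbarR h z

/-- The Gaussian curvature `K = −2(h·∂∂̄h − ∂h·∂̄h)/h³` of the conformal metric `h|dz|²`. -/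
noncomputable def gaussCurv (h : ℂ → ℝ) (z : ℂ) : ℂ :=
  -2 * curvNum h z / (h z : ℂ) ^ 3

/-- `g` is real differentiable at `z` with Wirtinger derivatives `a`, `b`. -/
def HasW (g : ℂ → ℂ) (a b z : ℂ) : Prop :=
  ∃ L : ℂ →L[ℝ] ℂ, HasFDerivAt g L z ∧ ∀ v, L v = a * v + b * (starRingEnd ℂ) v

theorem HasW.wdz {g : ℂ → ℂ} {a b z : ℂ} (h : HasW g a b z) : wdz g z = a := by
  obtain ⟨L, hL, hv⟩ := h
  rw [_root_.wdz, hL.fderiv, hv, hv]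
  simp only [map_one, Complex.conj_I]
  linear_combination (-a + b) / 2 * Complex.I_mul_I

theorem HasW.wdzbar {g : ℂ → ℂ} {a b z : ℂ} (h : HasW g a b z) : wdzbar g z = b := by
  obtain ⟨L, hL, hv⟩ := h
  rw [_root_.wdzbar, hL.fderiv, hv, hv]
  simp only [map_one, Complex.conj_I]
  linear_combination (a - b) / 2 * Complex.I_mul_I

theorem HasW.congr {g g₂ : ℂ → ℂ} {a b z : ℂ} (h : HasW g a b z) (e : g₂ =ᶠ[𝓝 z] g) :
    HasW g₂ a b z := by
  obtain ⟨L, hL, hv⟩ := h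
  exact ⟨L, hL.congr_of_eventuallyEq e, hv⟩

theorem HasW.of_eq {g : ℂ → ℂ} {a b a' b' z : ℂ} (h : HasW g a b z) (ha : a = a') (hb : b = b') :
    HasW g a' b' z := by subst ha hb; exact h

theorem HasW.mul {g k : ℂ → ℂ} {a b c d z : ℂ} (h : HasW g a b z) (h' : HasW k c d z) :
    HasW (fun w => g w * k w) (a * k z + g z * c) (b * k z + g z * d) z := by
  obtain ⟨L, hL, hv⟩ := h
  obtain ⟨M, hM, hw⟩ := h'
  refine ⟨_, hL.mul hM, fun v => ?_⟩
  simp [hv, hw]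
  ring

theorem HasW.add {g k : ℂ → ℂ} {a b c d z : ℂ} (h : HasW g a b z) (h' : HasW k c d z) :
    HasW (fun w => g w + k w) (a + c) (b + d) z := by
  obtain ⟨L, hL, hv⟩ := h
  obtain ⟨M, hM, hw⟩ := h'
  refine ⟨_, hL.add hM, fun v => ?_⟩
  simp [hv, hw]
  ring

theorem hasW_const (c z : ℂ) : HasW (fun _ => c) 0 0 z :=
  ⟨0, hasFDerivAt_const c z, fun v => by simp⟩

theorem hasW_hol {g : ℂ → ℂ} {a z : ℂ} (h : HasDerivAt g a z) : HasW g a 0 z := by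
  refine ⟨_, h.hasFDerivAt.restrictScalars ℝ, fun v => ?_⟩
  simp [mul_comm]

theorem hasW_conj {g : ℂ → ℂ} {a z : ℂ} (h : HasDerivAt g a z) :
    HasW (fun w => (starRingEnd ℂ) (g w)) 0 ((starRingEnd ℂ) a) z := by
  obtain ⟨L, hL, hv⟩ := hasW_hol h
  refine ⟨_, (Complex.conjCLE.toContinuousLinearMap.hasFDerivAt).comp z hL, fun v => ?_⟩
  simp [hv]

theorem HasW.real_comp {g : ℂ → ℝ} {a b z : ℂ} (h : HasW (fun w => (g w : ℂ)) a b z)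
    {φ : ℝ → ℝ} {c : ℝ} (hφ : HasDerivAt φ c (g z)) :
    HasW (fun w => ((φ (g w) : ℝ) : ℂ)) (c * a) (c * b) z := by
  obtain ⟨L, hL, hv⟩ := h
  have h1 : HasFDerivAt g (Complex.reCLM.comp L) z :=
    (Complex.reCLM.hasFDerivAt).comp z hL
  have h2 : HasFDerivAt (fun w => (g w : ℂ)) (Complex.ofRealCLM.comp (Complex.reCLM.comp L)) z :=
    (Complex.ofRealCLM.hasFDerivAt).comp z h1
  have h3 := hL.unique h2
  have h4 : HasFDerivAt (fun w => φ (g w)) (c • (Complex.reCLM.comp L)) z :=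
    hφ.comp_hasFDerivAt z h1
  refine ⟨_, (Complex.ofRealCLM.hasFDerivAt).comp z h4, fun v => ?_⟩
  have h5 : L v = ((L v).re : ℂ) := by
    conv_lhs => rw [h3]
    simp
  have : ((c * (L v).re : ℝ) : ℂ) = c * L v := by rw [h5]; simp
  rw [mul_assoc, mul_assoc, ← mul_add, ← hv, ← this]
  simp

/-- sinh x / x -/
noncomputable def shc : ℝ → ℝ := dslope Real.sinh 0

theorem shc_of_ne {x : ℝ} (hx : x ≠ 0) : shc x = Real.sinh x / x := by
  simp [shc, dslope_of_ne _ hx, slope_def_field]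

theorem shc_zero : shc 0 = 1 := by
  simp [shc]

theorem shc_contDiff : ContDiff ℝ 2 shc := by
  rw [contDiff_iff_contDiffAt]
  intro x
  by_cases hx : x = 0
  · subst hx
    obtain ⟨p, hp⟩ := (Real.contDiff_sinh (n := ⊤)).contDiffAt (x := (0:ℝ)) |>.analyticAt
    exact (hp.has_fpower_series_dslope_fslope.analyticAt).contDiffAt
  · have : shc =ᶠ[𝓝 x] fun y => Real.sinh y / y := by
      filter_upwards [isOpen_ne.mem_nhds hx] with y hy using shc_of_ne hy
    exact (Real.contDiff_sinh.contDiffAt.div contDiffAt_id hx).congr_of_eventuallyEq this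

theorem shc_pos (x : ℝ) : 0 < shc x := by
  rcases lt_trichotomy x 0 with h | h | h
  · rw [shc_of_ne h.ne]; exact div_pos_of_neg_of_neg (Real.sinh_neg_iff.2 h) h
  · subst h; simp [shc_zero]
  · rw [shc_of_ne h.ne']; exact div_pos (Real.sinh_pos_iff.2 h) h

theorem shc_deriv {x : ℝ} : HasDerivAt shc (deriv shc x) x :=
  (shc_contDiff.differentiable (by norm_num) x).hasDerivAt

theorem shc_deriv2 {x : ℝ} : HasDerivAt (deriv shc) (deriv (deriv shc) x) x := by
  have : ContDiff ℝ 1 (deriv shc) := shc_contDiff.deriv'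
  exact (this.differentiable (by norm_num) x).hasDerivAt

theorem shc_logconv (x : ℝ) : 0 ≤ shc x * deriv (deriv shc) x - deriv shc x ^ 2 := by
  have c0 : Continuous shc := shc_contDiff.continuous
  have d1 : ContDiff ℝ 1 (deriv shc) := shc_contDiff.deriv'
  have c1 : Continuous (deriv shc) := d1.continuous
  have c2 : Continuous (deriv (deriv shc)) := d1.continuous_deriv le_rfl
  have hc : IsClosed {x : ℝ | 0 ≤ shc x * deriv (deriv shc) x - deriv shc x ^ 2} :=
    isClosed_le continuous_const (by fun_prop)
  have hd : Dense ({0}ᶜ : Set ℝ) := dense_compl_singleton 0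
  have hs : ({0}ᶜ : Set ℝ) ⊆ {x : ℝ | 0 ≤ shc x * deriv (deriv shc) x - deriv shc x ^ 2} := by
    intro y hy
    have hy : y ≠ 0 := hy
    have e1 : ∀ w : ℝ, w ≠ 0 → deriv shc w = (Real.cosh w * w - Real.sinh w) / w ^ 2 := by
      intro w hw
      have : shc =ᶠ[𝓝 w] fun y => Real.sinh y / y := by
        filter_upwards [isOpen_ne.mem_nhds hw] with y hy using shc_of_ne hy
      rw [this.deriv_eq]
      have := ((Real.hasDerivAt_sinh w).div (hasDerivAt_id w) hw).deriv
      refine this.trans ?_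
      simp
    have e2 : deriv (deriv shc) y = (y ^ 2 * Real.sinh y - 2 * y * Real.cosh y
        + 2 * Real.sinh y) / y ^ 3 := by
      have : deriv shc =ᶠ[𝓝 y] fun w => (Real.cosh w * w - Real.sinh w) / w ^ 2 := by
        filter_upwards [isOpen_ne.mem_nhds hy] with y hy using e1 y hy
      rw [this.deriv_eq]
      have := ((((Real.hasDerivAt_cosh y).mul (hasDerivAt_id y)).sub
        (Real.hasDerivAt_sinh y)).div (hasDerivAt_pow 2 y) (pow_ne_zero 2 hy)).deriv
      refine this.trans ?_
      simp
      field_simp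
      ring
    rw [Set.mem_ofPred_eq]
    rw [e1 y hy, e2, shc_of_ne hy]
    have h1 : y ^ 2 ≤ Real.sinh y ^ 2 := by
      rw [sq_le_sq, Real.abs_sinh]
      exact Real.self_le_sinh_iff.2 (abs_nonneg y)
    have h2 : Real.sinh y / y * ((y ^ 2 * Real.sinh y - 2 * y * Real.cosh y
        + 2 * Real.sinh y) / y ^ 3) - ((Real.cosh y * y - Real.sinh y) / y ^ 2) ^ 2
        = (Real.sinh y ^ 2 - y ^ 2) / y ^ 4 := by
      field_simp
      linear_combination (-y ^ 2) * Real.cosh_sq y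
    rw [h2]
    exact div_nonneg (by linarith) (by positivity)
  have := hc.closure_subset_iff.2 hs
  rw [hd.closure_eq] at this
  exact this (Set.mem_univ x)

/-- The profile. -/
theorem profile : ∃ G G1 G2 : ℝ → ℝ, (∀ x, HasDerivAt G (G1 x) x) ∧ (∀ x, HasDerivAt G1 (G2 x) x) ∧
    (∀ x, 0 < G x) ∧ (∀ x, 0 ≤ G x * G2 x - G1 x ^ 2) ∧
    (∀ t : ℝ, 0 < t → 1 + t * u t ^ 2 = G (Real.log t / 2)) := by
  refine ⟨fun x => 1 + shc x ^ 2, fun x => 2 * (shc x * deriv shc x),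
    fun x => 2 * (deriv shc x * deriv shc x + shc x * deriv (deriv shc) x), ?_, ?_, ?_, ?_, ?_⟩
  · intro x
    have := (shc_deriv (x := x).pow 2).const_add 1
    refine HasDerivAt.congr_deriv (f := fun x => 1 + shc x ^ 2) this ?_
    norm_num; ring
  · intro x
    exact (shc_deriv.mul shc_deriv2).const_mul 2
  · intro x; positivity
  · intro x
    have h := shc_logconv x
    have h0 := shc_pos x
    have : (1 + shc x ^ 2) * (2 * (deriv shc x * deriv shc x + shc x * deriv (deriv shc) x))
      - (2 * (shc x * deriv shc x)) ^ 2 = 2 * (1 + shc x ^ 2) *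
        (shc x * deriv (deriv shc) x - deriv shc x ^ 2) + 4 * deriv shc x ^ 2 := by ring
    simp only [this]
    positivity
  · intro t ht
    show _ = 1 + _
    congr 1
    by_cases h1 : t = 1
    · subst h1; simp [u, shc_zero]
    · have hl : Real.log t ≠ 0 := Real.log_ne_zero_of_pos_of_ne_one ht h1
      have hl2 : Real.log t / 2 ≠ 0 := div_ne_zero hl two_ne_zero
      rw [shc_of_ne hl2, u, if_neg h1, Real.sinh_eq]
      have ea : Real.exp (Real.log t / 2) ^ 2 = t := by
        rw [← Real.exp_nat_mul]
        rw [show ((2:ℕ):ℝ) * (Real.log t / 2) = Real.log t by push_cast; ring, Real.exp_log ht]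
      rw [Real.exp_neg]
      have hE := Real.exp_pos (Real.log t / 2)
      generalize Real.exp (Real.log t / 2) = E at *
      generalize Real.log t = l at *
      subst ea
      field_simp

theorem curv_nonneg (D A B : ℂ) (G G1 G2 : ℝ) (hG : 0 < G) (hc : 0 ≤ G * G2 - G1 ^ 2) :
    0 ≤ Complex.normSq D * Complex.normSq B * (G * G2 - G1 ^ 2) +
      (Complex.normSq A * G + 2 * (A * (starRingEnd ℂ) B).re * G1 + Complex.normSq B * G2) := by
  have h1 : 0 ≤ Complex.normSq D * Complex.normSq B * (G * G2 - G1 ^ 2) :=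
    mul_nonneg (mul_nonneg (Complex.normSq_nonneg _) (Complex.normSq_nonneg _)) hc
  refine add_nonneg h1 ?_
  have h2 : G * (Complex.normSq A * G + 2 * (A * (starRingEnd ℂ) B).re * G1 + Complex.normSq B * G2)
    = Complex.normSq (A * G + B * G1) + Complex.normSq B * (G * G2 - G1 ^ 2) := by
    simp [Complex.normSq_apply]; ring
  have h3 : 0 ≤ G * (Complex.normSq A * G + 2 * (A * (starRingEnd ℂ) B).re * G1
      + Complex.normSq B * G2) := by
    rw [h2]
    exact add_nonneg (Complex.normSq_nonneg _) (mul_nonneg (Complex.normSq_nonneg _) hc)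
  exact nonneg_of_mul_nonneg_right h3 hG

/-- for a nonconstant entire `f`, the Gaussian curvature of the metric
`h(z)|dz|²` with `h = |f′|²(1 + |f|²u(|f|²)²) + 1` is `≤ 0` at every point off the zero
set of `f`. -/
theorem stmt6 (f : ℂ → ℂ) (hf : Differentiable ℂ f)
    (hfnc : ¬ ∃ c : ℂ, ∀ z, f z = c)
    (p : ℂ) (hfp : f p ≠ 0) :
    gaussCurv (fun z =>
      ‖deriv f z‖ ^ 2 * (1 + ‖f z‖ ^ 2 * u (‖f z‖ ^ 2) ^ 2) + 1) p ≤ 0 := by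
  obtain ⟨G, G1, G2, hG1, hG2, hpos, hlc, hGu⟩ := profile
  set D : ℂ → ℂ := deriv f with hD
  set A : ℂ → ℂ := deriv D with hA
  have conj2 : (starRingEnd ℂ) 2 = 2 := map_ofNat _ 2
  have hf1 : ∀ z, HasDerivAt f (D z) z := fun z => (hf z).hasDerivAt
  have hDd : Differentiable ℂ D := hf.deriv
  have hf2 : ∀ z, HasDerivAt D (A z) z := fun z => (hDd z).hasDerivAt
  set x : ℂ → ℝ := fun z => Real.log (Complex.normSq (f z)) / 2 with hx
  have hxW : ∀ z, f z ≠ 0 → HasW (fun w => (x w : ℂ)) (D z / (2 * f z))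
      ((starRingEnd ℂ) (D z) / (2 * (starRingEnd ℂ) (f z))) z := by
    intro z hz
    have hz' : (starRingEnd ℂ) (f z) ≠ 0 := by simpa using hz
    have h1 : HasW (fun w => (Complex.normSq (f w) : ℂ)) (D z * (starRingEnd ℂ) (f z))
        (f z * (starRingEnd ℂ) (D z)) z := by
      have := (hasW_hol (hf1 z)).mul (hasW_conj (hf1 z))
      refine (this.of_eq (by simp) (by simp)).congr (Eventually.of_forall fun w => ?_)
      simp [Complex.mul_conj]
    have h2 := h1.real_comp
      ((Real.hasDerivAt_log (Complex.normSq_pos.2 hz).ne').div_const 2)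
    refine h2.of_eq ?_ ?_
    · push_cast
      rw [Complex.normSq_eq_conj_mul_self]; field_simp
    · push_cast
      rw [Complex.normSq_eq_conj_mul_self]; field_simp
  set h : ℂ → ℝ := fun z =>
      ‖D z‖ ^ 2 * (1 + ‖f z‖ ^ 2 * u (‖f z‖ ^ 2) ^ 2) + 1 with hh
  have hval : ∀ z, f z ≠ 0 → (h z : ℂ) = D z * (starRingEnd ℂ) (D z) * (G (x z) : ℂ) + 1 := by
    intro z hz
    have : h z = Complex.normSq (D z) * G (x z) + 1 := by
      simp only [hh, hx]
      rw [← hGu _ (Complex.normSq_pos.2 hz), Complex.normSq_eq_norm_sq, Complex.normSq_eq_norm_sq]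
    rw [this, Complex.mul_conj]; push_cast; rfl
  have hev : ∀ z, f z ≠ 0 → ∀ᶠ w in 𝓝 z, f w ≠ 0 := fun z hz =>
    (hf.continuous.continuousAt).eventually_ne hz
  have hhW : ∀ z, f z ≠ 0 → HasW (fun w => (h w : ℂ))
      ((starRingEnd ℂ) (D z) * (A z * G (x z) + D z * (D z / (2 * f z)) * G1 (x z)))
      (D z * ((starRingEnd ℂ) (A z) * G (x z) + (starRingEnd ℂ) (D z) *
        ((starRingEnd ℂ) (D z) / (2 * (starRingEnd ℂ) (f z))) * G1 (x z))) z := by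
    intro z hz
    have h1 := (((hasW_hol (hf2 z)).mul (hasW_conj (hf2 z))).mul
      ((hxW z hz).real_comp (hG1 (x z)))).add (hasW_const 1 z)
    refine (h1.congr ((hev z hz).mono fun w hw => hval w hw)).of_eq ?_ ?_
    · ring
    · ring
  have hlap : wlapR h p = A p * ((starRingEnd ℂ) (A p) * G (x p) + (starRingEnd ℂ) (D p) *
        ((starRingEnd ℂ) (D p) / (2 * (starRingEnd ℂ) (f p))) * G1 (x p)) +
      D p * ((starRingEnd ℂ) (A p) * (G1 (x p) * (D p / (2 * f p))) + (starRingEnd ℂ) (D p) *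
        ((starRingEnd ℂ) (D p) / (2 * (starRingEnd ℂ) (f p))) * (G2 (x p) * (D p / (2 * f p)))) := by
    have hq : HasDerivAt (fun w => D w * (D w / (2 * f w)))
        (deriv (fun w => D w * (D w / (2 * f w))) p) p := by
      refine DifferentiableAt.hasDerivAt ?_
      exact (hDd p).mul ((hDd p).div ((hf p).const_mul 2) (by simpa using hfp))
    have hA2 := hasW_conj (hDd.deriv p).hasDerivAt
    have hW := (hasW_hol (hf2 p)).mul ((hA2.mul ((hxW p hfp).real_comp (hG1 (x p)))).add
      ((hasW_conj hq).mul ((hxW p hfp).real_comp (hG2 (x p)))))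
    have hW2 : HasW (wdzbarR h) _ _ p := hW.congr ((hev p hfp).mono fun w hw => by
      rw [wdzbarR, (hhW w hw).wdzbar]; simp [hA, conj2])
    rw [wlapR, hW2.wdz]
    simp [hA, conj2]
  have e1 : wdzR h p = _ := (hhW p hfp).wdz
  have e2 : wdzbarR h p = _ := (hhW p hfp).wdzbar
  have key := curv_nonneg (D p) (A p) (D p * (D p / (2 * f p))) _ _ _ (hpos (x p)) (hlc (x p))
  set N := Complex.normSq (D p) * Complex.normSq (D p * (D p / (2 * f p))) *
      (G (x p) * G2 (x p) - G1 (x p) ^ 2) +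
      (Complex.normSq (A p) * G (x p) +
        2 * (A p * (starRingEnd ℂ) (D p * (D p / (2 * f p)))).re * G1 (x p) +
        Complex.normSq (D p * (D p / (2 * f p))) * G2 (x p)) with hN
  have hnum : curvNum h p = (N : ℂ) := by
    have hre : ((2 * (A p * (starRingEnd ℂ) (D p * (D p / (2 * f p)))).re : ℝ) : ℂ) =
      A p * (starRingEnd ℂ) (D p * (D p / (2 * f p))) +
      (starRingEnd ℂ) (A p) * (D p * (D p / (2 * f p))) := by
      rw [← Complex.add_conj]; simp
    rw [curvNum, hlap, e1, e2, hval p hfp, hN]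
    rw [Complex.ofReal_add, Complex.ofReal_add, Complex.ofReal_add,
      Complex.ofReal_mul (2 * _) (G1 _), hre]
    push_cast
    simp only [← Complex.mul_conj]
    simp only [map_mul, map_div₀, map_ofNat]
    ring
  have hhp : 0 < h p := by
    have h0 : 0 ≤ 1 + ‖f p‖ ^ 2 * u (‖f p‖ ^ 2) ^ 2 := by positivity
    simp only [hh]; positivity
  rw [gaussCurv, hnum]
  have : -2 * (N : ℂ) / (h p : ℂ) ^ 3 = ((-(2 * N / h p ^ 3) : ℝ) : ℂ) := by
    push_cast; ring
  rw [this]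
  have h3 : 0 ≤ 2 * N / h p ^ 3 := by positivity
  exact_mod_cast neg_nonpos.2 h3
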